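/- For all real 3×4 matrices P_i and P_j, the determinant of the 3×3 matrix 𝓕(P_i, P_j) is zero (the fundamental matrix always has rank at most 2). -/

import Mathlib

open Matrix

/-- The fundamental matrix of a camera pair `(P, Q)` of `3 × 4` matrices:
its `(h,k)` entry is `(-1)^(h+k)` times the determinant of the `4 × 4` matrix
obtained by stacking the rows of `P` other than row `k` (in their original order)
on top of the rows of `Q` other than row `h` (in their original order). -/
def fund {K : Type*} [CommRing K] (P Q : Matrix (Fin 3) (Fin 4) K) :
    Matrix (Fin 3) (Fin 3) K :=
  Matrix.of fun h k =>
    (-1 : K) ^ ((h : ℕ) + (k : ℕ)) *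
      (Matrix.of fun r c : Fin 4 =>
          if hr : (r : ℕ) < 2 then P (k.succAbove ⟨(r : ℕ), hr⟩) c
          else Q (h.succAbove ⟨(r : ℕ) - 2, by have := r.isLt; omega⟩) c).det

/-!
The proof rests on the identity `fund P Q * P = [e]ₓ * Q`, where `e` is the epipole and `[e]ₓ` the
matrix of the cross product with `e`. Since `[e]ₓ` is singular, restricting the identity to three
columns shows that every `3 × 3` minor of `P` annihilates `(fund P Q).det`. Adding an indeterminate
`X` along the diagonal of `P` makes one of these minors monic in `X`, so the determinant vanishes
for the perturbed pair, and specializing `X` to `0` recovers `P`.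
-/

open Polynomial

section General

variable {R : Type*} [CommRing R]

theorem sum_neg_one_pow_mul_det_submatrix_smul_eq_zero {n : ℕ}
    (A : Matrix (Fin (n + 1)) (Fin n) R) :
    ∑ i : Fin (n + 1), ((-1) ^ (i : ℕ) * (A.submatrix i.succAbove id).det) • A i = 0 := by
  ext j
  -- Expand the determinant of `A` with its column `j` repeated in front.
  have expansion := det_succ_column_zero (of fun i => vecCons (A i j) (A i))
  rw [det_zero_of_column_eq (Fin.succ_ne_zero j).symm fun _ => rfl] at expansion
  rw [Finset.sum_apply, Pi.zero_apply, expansion]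
  exact Finset.sum_congr rfl fun i _ => mul_right_comm _ _ _

theorem det_smul_five_vectors_eq_zero (a b c d e : Fin 4 → R) :
    (of ![b, c, d, e]).det • a - (of ![a, c, d, e]).det • b + (of ![a, b, d, e]).det • c
      - (of ![a, b, c, e]).det • d + (of ![a, b, c, d]).det • e = 0 := by
  have omit_row (i : Fin 5) : (of ![a, b, c, d, e]).submatrix i.succAbove id =
      of (![![b, c, d, e], ![a, c, d, e], ![a, b, d, e], ![a, b, c, e], ![a, b, c, d]] i) := by
    ext r s
    fin_cases i <;> fin_cases r <;> rfl
  have relation := sum_neg_one_pow_mul_det_submatrix_smul_eq_zero (of ![a, b, c, d, e])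
  rw [Fin.sum_univ_five, omit_row 0, omit_row 1, omit_row 2, omit_row 3, omit_row 4] at relation
  rw [← relation]
  ext s
  simp [pow_succ, sub_eq_add_neg]

theorem toMatrix'_crossProduct (v : Fin 3 → R) :
    (crossProduct v).toMatrix' = !![0, -v 2, v 1; v 2, 0, -v 0; -v 1, v 0, 0] := by
  ext i j
  fin_cases i <;> fin_cases j <;> simp [LinearMap.toMatrix'_apply, cross_apply]

theorem det_crossProduct_eq_zero (v : Fin 3 → R) : LinearMap.det (crossProduct v) = 0 := by
  rw [← LinearMap.det_toMatrix', toMatrix'_crossProduct, det_fin_three]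
  simp only [of_apply, cons_val', cons_val]
  ring

theorem monic_det_X_smul_add_mul {m n : Type*} [Fintype m] [DecidableEq m] [Fintype n]
    {M : Matrix m n R} {N : Matrix n m R} (hMN : M * N = 1) (A : Matrix m n R) :
    (((X : R[X]) • M.map C + A.map C) * N.map C).det.Monic := by
  rw [Matrix.add_mul, smul_mul, ← Matrix.map_mul, ← Matrix.map_mul, hMN,
    Matrix.map_one _ C.map_zero C.map_one]
  exact leadingCoeff_det_X_one_add_C (A * N)

end General

section FundamentalMatrix

variable {K : Type*} [CommRing K]

theorem fund_apply (P Q : Matrix (Fin 3) (Fin 4) K) (h k : Fin 3) :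
    fund P Q h k = (-1) ^ ((h : ℕ) + (k : ℕ)) *
      (of ![P (k.succAbove 0), P (k.succAbove 1), Q (h.succAbove 0), Q (h.succAbove 1)]).det := by
  rw [fund, of_apply]
  congr 2
  ext r c
  fin_cases r <;> rfl

theorem fund_map {L : Type*} [CommRing L] (f : K →+* L) (P Q : Matrix (Fin 3) (Fin 4) K) :
    fund (P.map f) (Q.map f) = (fund P Q).map f := by
  ext h k
  simp only [fund_apply, map_apply, map_mul, map_pow, map_neg, map_one, RingHom.map_det]
  congr 2
  ext r c
  fin_cases r <;> rfl

/-- The epipole of the camera pair `(P, Q)` in the second image, that is, the image under `Q` of the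
centre of `P`. The centre, spanning the kernel of `P` when `P` has full rank, is represented by
signed maximal minors of `P`; the overall sign is the one that makes
`fund_mul_eq_crossProduct_mul` hold. -/
def epipole (P Q : Matrix (Fin 3) (Fin 4) K) : Fin 3 → K :=
  fun i => -(of ![P 0, P 1, P 2, Q i]).det

theorem fund_mul_eq_crossProduct_mul (P Q : Matrix (Fin 3) (Fin 4) K) :
    fund P Q * P = (crossProduct (epipole P Q)).toMatrix' * Q := by
  ext h c
  have relation := congrFun (det_smul_five_vectors_eq_zero (P 0) (P 1) (P 2)
    (Q (h.succAbove 0)) (Q (h.succAbove 1))) c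
  simp only [Pi.add_apply, Pi.sub_apply, Pi.smul_apply, Pi.zero_apply, smul_eq_mul] at relation
  have fund_row : (fund P Q * P) h c = (-1) ^ (h : ℕ) *
      (epipole P Q (h.succAbove 0) * Q (h.succAbove 1) c
        - epipole P Q (h.succAbove 1) * Q (h.succAbove 0) c) := by
    have fund_zero : fund P Q h 0 = (-1) ^ (h : ℕ) *
        (of ![P 1, P 2, Q (h.succAbove 0), Q (h.succAbove 1)]).det := fund_apply P Q h 0
    have fund_one : fund P Q h 1 = (-1) ^ ((h : ℕ) + 1) *
        (of ![P 0, P 2, Q (h.succAbove 0), Q (h.succAbove 1)]).det := fund_apply P Q h 1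
    have fund_two : fund P Q h 2 = (-1) ^ ((h : ℕ) + 2) *
        (of ![P 0, P 1, Q (h.succAbove 0), Q (h.succAbove 1)]).det := fund_apply P Q h 2
    rw [mul_apply, Fin.sum_univ_three, fund_zero, fund_one, fund_two, epipole, epipole]
    linear_combination (-1) ^ (h : ℕ) * relation
  rw [fund_row, toMatrix'_crossProduct, mul_apply, Fin.sum_univ_three]
  fin_cases h <;> simp [Fin.succAbove, sub_eq_add_neg, add_comm]

theorem det_fund_mul_det_mul_eq_zero (P Q : Matrix (Fin 3) (Fin 4) K)
    (N : Matrix (Fin 4) (Fin 3) K) : (fund P Q).det * (P * N).det = 0 := by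
  rw [← det_mul, ← Matrix.mul_assoc, fund_mul_eq_crossProduct_mul, Matrix.mul_assoc, det_mul,
    LinearMap.det_toMatrix', det_crossProduct_eq_zero, zero_mul]

theorem fund_det_eq_zero_general (P Q : Matrix (Fin 3) (Fin 4) K) : (fund P Q).det = 0 := by
  let M : Matrix (Fin 3) (Fin 4) K := (1 : Matrix (Fin 4) (Fin 4) K).submatrix Fin.castSucc id
  let N : Matrix (Fin 4) (Fin 3) K := (1 : Matrix (Fin 4) (Fin 4) K).submatrix id Fin.castSucc
  let PX : Matrix (Fin 3) (Fin 4) K[X] := (X : K[X]) • M.map C + P.map C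
  have M_mul_N : M * N = 1 := by
    rw [← submatrix_mul _ _ _ _ _ Function.bijective_id, Matrix.one_mul,
      submatrix_one _ (Fin.castSucc_injective 3)]
  have det_fund_PX : (fund PX (Q.map C)).det = 0 :=
    (monic_det_X_smul_add_mul M_mul_N P).mul_left_eq_zero_iff.1
      (det_fund_mul_det_mul_eq_zero PX (Q.map C) (N.map C))
  have PX_eval : PX.map (evalRingHom 0) = P := by
    ext i j
    simp [PX]
  have Q_eval : (Q.map C).map (evalRingHom 0) = Q := by
    ext i j
    simp
  calc (fund P Q).det
      = (fund (PX.map (evalRingHom 0)) ((Q.map C).map (evalRingHom 0))).det := by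
        rw [PX_eval, Q_eval]
    _ = evalRingHom 0 (fund PX (Q.map C)).det := by rw [fund_map, RingHom.map_det]; rfl
    _ = 0 := by rw [det_fund_PX, map_zero]

end FundamentalMatrix

/-- the determinant of the fundamental matrix is always zero
(the fundamental matrix has rank at most 2). -/
theorem fund_det_eq_zero (Pi Pj : Matrix (Fin 3) (Fin 4) ℝ) :
    (fund Pi Pj).det = 0 :=
  fund_det_eq_zero_general Pi Pj
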